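/- arXiv:2109.02756 — 2 statements merged into one kernel-verified Lean document; each statement's English description precedes it below -/
import Mathlib

section
/- Under the setting of the PIPG iteration (P symmetric positive semidefinite, D nonempty closed convex, K nonempty closed convex cone, step size α satisfying 0 < α ≤ (8 − 4/γ)/(√(λ² + 16ν²) + λ) for some γ ∈ (1/2, 1), λ ≥ ‖P‖, ν ≥ ‖H‖), let z̄ = lim_{j→∞}(z^j − z^{j−1}) be the limit of consecutive differences of the primal PIPG iterates. If ‖z̄‖ > 0, then z̄ ∈ rec D, H z̄ ∈ K, P z̄ = 0, and ⟨q, z̄⟩ < 0. -/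
open scoped RealInnerProductSpace
open Filter Topology Metric ContinuousLinearMap

/-- Projection onto a set: the unique nearest point, when it exists
(it exists and is unique for nonempty closed convex sets in Euclidean space). -/
noncomputable def proj {E : Type*} [NormedAddCommGroup E] [InnerProductSpace ℝ E]
    (S : Set E) (x : E) : E :=
  open Classical in
  if h : ∃ y, y ∈ S ∧ ∀ z ∈ S, ‖x - y‖ ≤ ‖x - z‖ then h.choose else 0

/-- The polar cone `K° = {w | ⟪w, y⟫ ≤ 0 for all y ∈ K}`. -/
def polarCone {E : Type*} [NormedAddCommGroup E] [InnerProductSpace ℝ E]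
    (K : Set E) : Set E := {w | ∀ y ∈ K, ⟪w, y⟫ ≤ 0}

/-- The recession cone `rec D = {y | y + z ∈ D for all z ∈ D}`. -/
def recCone {E : Type*} [NormedAddCommGroup E] (D : Set E) : Set E :=
  {y | ∀ z ∈ D, y + z ∈ D}

/-- The normal cone of `D` at `z`: `N_D(z) = {y | ⟪y, z' - z⟫ ≤ 0 for all z' ∈ D}`. -/
def normalCone {E : Type*} [NormedAddCommGroup E] [InnerProductSpace ℝ E]
    (D : Set E) (z : E) : Set E := {y | ∀ z' ∈ D, ⟪y, z' - z⟫ ≤ 0}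

/-!
After absorbing the step size into the data, the step-size bound says `‖P‖ / 2 + ‖H‖ ^ 2 ≤ 1` and
makes PIPG nonexpansive for the semidefinite form `‖z‖ ^ 2 + ‖w‖ ^ 2 - 2 ⟪H z, w⟫`. By Pazy's
theorem on nonexpansive orbits (a consequence of uniform convexity, hence valid for seminorms coming
from a semi-inner product), `w j / j` converges to some `w̄` in the polar cone, just as `z j / j`
converges to `z̄`, which is therefore a recession direction of `D`.

The form evaluated at consecutive differences decreases, and its decrease dominates the quadratic
form of `P` at a sum tending to `2 z̄`; hence `P z̄ = 0`. Averaging the optimality conditions of the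
two projections yields `H z̄ ∈ K°° = K`, and then
`‖z̄‖ ^ 2 + ⟪q, z̄⟫ ≤ -⟪H z̄, w̄⟫ ≤ 0`.
-/

section ConvexCones

theorem norm_sub_eq_iInf_iff {E : Type*} [SeminormedAddCommGroup E] {S : Set E} {x y : E}
    (hy : y ∈ S) :
    ‖x - y‖ = ⨅ z : S, ‖x - z‖ ↔ ∀ z ∈ S, ‖x - y‖ ≤ ‖x - z‖ := by
  have : Nonempty S := ⟨⟨y, hy⟩⟩
  have hbdd : BddBelow (Set.range fun z : S => ‖x - z‖) := ⟨0, by rintro _ ⟨z, rfl⟩; positivity⟩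
  refine ⟨fun h z hz => h ▸ ciInf_le hbdd ⟨z, hz⟩, fun h => ?_⟩
  exact le_antisymm (le_ciInf fun z => h z z.2) (ciInf_le hbdd ⟨y, hy⟩)

variable {E : Type*} [NormedAddCommGroup E] [InnerProductSpace ℝ E]

theorem proj_spec_of_exists {S : Set E} {x : E} (h : ∃ y ∈ S, ∀ z ∈ S, ‖x - y‖ ≤ ‖x - z‖) :
    _root_.proj S x ∈ S ∧ ∀ z ∈ S, ‖x - _root_.proj S x‖ ≤ ‖x - z‖ := by
  rw [_root_.proj, dif_pos h]
  exact h.choose_spec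

theorem proj_mem_and_sub_proj_mem_normalCone [CompleteSpace E] {S : Set E} (hne : S.Nonempty)
    (hcl : IsClosed S) (hconv : Convex ℝ S) (x : E) :
    _root_.proj S x ∈ S ∧ x - _root_.proj S x ∈ normalCone S (_root_.proj S x) := by
  obtain ⟨y, hy, hmin⟩ := exists_norm_eq_iInf_of_complete_convex hne hcl.isComplete hconv x
  obtain ⟨hmem, hle⟩ := proj_spec_of_exists ⟨y, hy, (norm_sub_eq_iInf_iff hy).1 hmin⟩
  exact ⟨hmem, (norm_eq_iInf_iff_real_inner_le_zero hconv hmem).1 <|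
    (norm_sub_eq_iInf_iff hmem).2 hle⟩

theorem inner_sub_sub_nonneg_of_mem_normalCone {S : Set E} {x y a b : E} (hx : x ∈ S) (hy : y ∈ S)
    (ha : a ∈ normalCone S x) (hb : b ∈ normalCone S y) : 0 ≤ ⟪a - b, x - y⟫ := by
  have hxy : ⟪a, y - x⟫ ≤ 0 := ha y hy
  have hyx : ⟪b, x - y⟫ ≤ 0 := hb x hx
  rw [← neg_sub x y, inner_neg_right] at hxy
  rw [inner_sub_left]
  linarith

theorem inner_eq_zero_of_mem_normalCone {C : Set E} (hcone : ∀ y ∈ C, ∀ a : ℝ, 0 ≤ a → a • y ∈ C)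
    {r y : E} (hy : y ∈ C) (hr : r ∈ normalCone C y) : ⟪r, y⟫ = 0 := by
  have hzero : ⟪r, (0 : ℝ) • y - y⟫ ≤ 0 := hr _ (hcone y hy 0 le_rfl)
  have htwo : ⟪r, (2 : ℝ) • y - y⟫ ≤ 0 := hr _ (hcone y hy 2 zero_le_two)
  rw [inner_sub_right, real_inner_smul_right] at hzero htwo
  linarith

theorem mem_polarCone_of_mem_normalCone {C : Set E}
    (hcone : ∀ y ∈ C, ∀ a : ℝ, 0 ≤ a → a • y ∈ C) {r y : E} (hy : y ∈ C)
    (hr : r ∈ normalCone C y) : r ∈ polarCone C := fun p hp => by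
  have h : ⟪r, p - y⟫ ≤ 0 := hr p hp
  rwa [inner_sub_right, inner_eq_zero_of_mem_normalCone hcone hy hr, sub_zero] at h

theorem zero_mem_polarCone (K : Set E) : (0 : E) ∈ polarCone K := fun y _ => by
  rw [inner_zero_left]

theorem smul_mem_polarCone {K : Set E} {w : E} (hw : w ∈ polarCone K) {a : ℝ} (ha : 0 ≤ a) :
    a • w ∈ polarCone K := fun y hy => by
  rw [real_inner_smul_left]
  exact mul_nonpos_of_nonneg_of_nonpos ha (hw y hy)

theorem convex_polarCone (K : Set E) : Convex ℝ (polarCone K) :=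
  fun u hu v hv a b ha hb _ y hy => by
    rw [inner_add_left]
    exact add_nonpos (smul_mem_polarCone hu ha y hy) (smul_mem_polarCone hv hb y hy)

theorem isClosed_polarCone (K : Set E) : IsClosed (polarCone K) := by
  simp only [polarCone, Set.ofPred_forall]
  exact isClosed_biInter fun y _ => isClosed_le (by fun_prop) continuous_const

theorem polarCone_polarCone_subset [CompleteSpace E] {K : Set E} (hne : K.Nonempty)
    (hcl : IsClosed K) (hconv : Convex ℝ K) (hcone : ∀ y ∈ K, ∀ a : ℝ, 0 ≤ a → a • y ∈ K) :
    polarCone (polarCone K) ⊆ K := fun x hx => by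
  obtain ⟨hmem, hnormal⟩ := proj_mem_and_sub_proj_mem_normalCone hne hcl hconv x
  set r : E := x - _root_.proj K x
  have hr : ⟪x, r⟫ ≤ 0 := hx r (mem_polarCone_of_mem_normalCone hcone hmem hnormal)
  have hsplit : ⟪x, r⟫ = ⟪r, r⟫ := by
    have h := inner_eq_zero_of_mem_normalCone hcone hmem hnormal
    rw [inner_sub_right r, h, sub_zero, real_inner_comm]
  have hr0 : r = 0 := inner_self_eq_zero.1 (le_antisymm (hsplit ▸ hr) real_inner_self_nonneg)
  rwa [sub_eq_zero.1 hr0]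

end ConvexCones

section NonexpansiveOrbits

variable {E : Type*} [SeminormedAddCommGroup E] {x : ℕ → E}

theorem norm_sub_add_le_of_nonexpansive (hx : ∀ i j, ‖x (i + 1) - x (j + 1)‖ ≤ ‖x i - x j‖)
    (i j k : ℕ) : ‖x (i + k) - x (j + k)‖ ≤ ‖x i - x j‖ := by
  induction k with
  | zero => exact le_rfl
  | succ k ih => exact (hx _ _).trans ih

theorem subadditive_norm_sub_zero_of_nonexpansive
    (hx : ∀ i j, ‖x (i + 1) - x (j + 1)‖ ≤ ‖x i - x j‖) :
    Subadditive fun n => ‖x n - x 0‖ := fun m n =>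
  calc ‖x (m + n) - x 0‖ ≤ ‖x (m + n) - x (0 + n)‖ + ‖x (0 + n) - x 0‖ :=
        norm_sub_le_norm_sub_add_norm_sub ..
    _ ≤ ‖x m - x 0‖ + ‖x n - x 0‖ := by
        rw [show x n = x (0 + n) by rw [zero_add]]
        gcongr
        exact norm_sub_add_le_of_nonexpansive hx m 0 n

theorem frequently_forall_mul_sub_lt {a : ℕ → ℝ} {ρ c : ℝ} (ha : ∀ n : ℕ, ρ * n ≤ a n)
    (hc : c < ρ) : ∃ᶠ n : ℕ in atTop, ∀ k < n, c * ((n : ℝ) - k) < a n - a k := by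
  have hlin : Tendsto (fun n : ℕ => (ρ - c) * (n : ℝ)) atTop atTop :=
    tendsto_natCast_atTop_atTop.const_mul_atTop (sub_pos.2 hc)
  have hexcess : Tendsto (fun n : ℕ => a n - c * n) atTop atTop :=
    tendsto_atTop_mono (fun n => by linarith [ha n]) hlin
  refine (frequently_high_scores hexcess).mono fun n hn k hk => ?_
  linarith [hn k hk]

theorem add_le_norm_smul_add_smul_of_forall_mul_sub_lt [NormedSpace ℝ E]
    (hx : ∀ i j, ‖x (i + 1) - x (j + 1)‖ ≤ ‖x i - x j‖) {n k : ℕ} {c : ℝ} (hk : 0 < k) (hkn : k ≤ n)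
    (hn : ∀ i < n, c * ((n : ℝ) - i) < ‖x n - x 0‖ - ‖x i - x 0‖) :
    ‖x n - x 0‖ / n + c ≤ ‖(k : ℝ)⁻¹ • (x k - x 0) + (n : ℝ)⁻¹ • (x n - x 0)‖ := by
  have hk0 : (0 : ℝ) < k := Nat.cast_pos.2 hk
  have hn0 : (0 : ℝ) < n := Nat.cast_pos.2 (hk.trans_le hkn)
  set s : E := (k : ℝ)⁻¹ • (x k - x 0) + (n : ℝ)⁻¹ • (x n - x 0)
  have hrecord : ‖x n - x k‖ ≤ ‖x n - x 0‖ - c * k := by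
    have hshift := norm_sub_add_le_of_nonexpansive hx (n - k) 0 k
    have hlt := hn (n - k) (by omega)
    rw [Nat.sub_add_cancel hkn, zero_add] at hshift
    rw [Nat.cast_sub hkn, sub_sub_cancel] at hlt
    linarith
  have hdecomp : (1 + k / n : ℝ) • (x n - x 0) = (x n - x k) + (k : ℝ) • s := by
    rw [smul_add, smul_inv_smul₀ hk0.ne']
    module
  set μ : ℝ := ‖x n - x 0‖ / n with hμ
  have htri : ‖x n - x 0‖ + k * μ ≤ ‖x n - x 0‖ - c * k + k * ‖s‖ :=
    calc ‖x n - x 0‖ + k * μ = ‖(x n - x k) + (k : ℝ) • s‖ := by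
          rw [← hdecomp, norm_smul, Real.norm_of_nonneg (by positivity), hμ]
          ring
      _ ≤ ‖x n - x k‖ + ‖(k : ℝ) • s‖ := norm_add_le _ _
      _ ≤ ‖x n - x 0‖ - c * k + k * ‖s‖ := by
          rw [norm_smul, Real.norm_of_nonneg hk0.le]
          gcongr
  exact le_of_mul_le_mul_left (by linarith) hk0

end NonexpansiveOrbits

section Pazy

variable {E : Type*} [SeminormedAddCommGroup E] [InnerProductSpace ℝ E]

theorem norm_sub_sq_le_of_le_norm_add {u v : E} {ρ ε : ℝ} (hρ : 0 ≤ ρ) (hu : ‖u‖ ≤ ρ + ε)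
    (hv : ‖v‖ ≤ ρ + ε) (huv : 2 * ρ - ε ≤ ‖u + v‖) : ‖u - v‖ ^ 2 ≤ 12 * ρ * ε + 4 * ε ^ 2 := by
  have hpar := parallelogram_law_with_norm ℝ u v
  have hu2 : ‖u‖ ^ 2 ≤ (ρ + ε) ^ 2 := by gcongr
  have hv2 : ‖v‖ ^ 2 ≤ (ρ + ε) ^ 2 := by gcongr
  have hε : 0 ≤ ρ + ε := (norm_nonneg u).trans hu
  have hadd : 4 * ρ ^ 2 - 4 * ρ * ε ≤ ‖u + v‖ ^ 2 := by
    rcases le_total 0 (2 * ρ - ε) with h | h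
    · nlinarith [pow_le_pow_left₀ h huv 2]
    · nlinarith [sq_nonneg ‖u + v‖]
  linarith

theorem exists_pos_forall_norm_sub_lt_of_le_norm_add {ρ δ : ℝ} (hρ : 0 ≤ ρ) (hδ : 0 < δ) :
    ∃ ε > 0, ∀ u v : E, ‖u‖ ≤ ρ + ε → ‖v‖ ≤ ρ + ε → 2 * ρ - ε ≤ ‖u + v‖ → ‖u - v‖ < δ := by
  have hcont : Continuous fun ε : ℝ => 12 * ρ * ε + 4 * ε ^ 2 := by fun_prop
  have hsmall : ∀ᶠ ε in 𝓝[>] (0 : ℝ), 12 * ρ * ε + 4 * ε ^ 2 < δ ^ 2 :=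
    nhdsWithin_le_nhds <| (hcont.tendsto 0).eventually_lt_const (by simpa using pow_pos hδ 2)
  obtain ⟨ε, hεδ, hε⟩ := (hsmall.and self_mem_nhdsWithin).exists
  exact ⟨ε, hε, fun u v hu hv huv => lt_of_pow_lt_pow_left₀ 2 hδ.le <|
    (norm_sub_sq_le_of_le_norm_add hρ hu hv huv).trans_lt hεδ⟩

variable {x : ℕ → E}

/- At a record time `n` of the excess `‖x n - x 0‖ - (ρ - ε) n`, where `ρ` is the limit of
`‖x n - x 0‖ / n`, the mean displacements up to `k ≤ n` and up to `n` as well as their midpoint all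
have length close to `ρ`, so uniform convexity brings them together. -/
theorem exists_frequently_forall_norm_sub_lt_of_nonexpansive
    (hx : ∀ i j, ‖x (i + 1) - x (j + 1)‖ ≤ ‖x i - x j‖) {δ : ℝ} (hδ : 0 < δ) :
    ∃ N : ℕ, ∃ᶠ n : ℕ in atTop, ∀ k : ℕ, N ≤ k → k ≤ n →
      ‖(k : ℝ)⁻¹ • (x k - x 0) - (n : ℝ)⁻¹ • (x n - x 0)‖ < δ := by
  have hsub := subadditive_norm_sub_zero_of_nonexpansive hx
  have hbdd : BddBelow (Set.range fun n : ℕ => ‖x n - x 0‖ / n) :=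
    ⟨0, by rintro _ ⟨n, rfl⟩; positivity⟩
  have hlim := hsub.tendsto_lim hbdd
  have hρ : 0 ≤ hsub.lim := ge_of_tendsto' hlim fun n => by positivity
  have hle : ∀ n : ℕ, 0 < n → hsub.lim ≤ ‖x n - x 0‖ / n := fun n hn =>
    hsub.lim_le_div hbdd hn.ne'
  have hlin : ∀ n : ℕ, hsub.lim * n ≤ ‖x n - x 0‖ := fun n => by
    rcases n.eq_zero_or_pos with rfl | hn
    · simp
    · exact (le_div_iff₀ (Nat.cast_pos.2 hn)).1 (hle n hn)
  obtain ⟨ε, hε, hconvex⟩ := exists_pos_forall_norm_sub_lt_of_le_norm_add (E := E) hρ hδ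
  have hmean : ∀ᶠ n : ℕ in atTop, ‖(n : ℝ)⁻¹ • (x n - x 0)‖ ≤ hsub.lim + ε := by
    filter_upwards [hlim.eventually_le_const (lt_add_of_pos_right _ hε)] with n hn
    rwa [norm_smul, norm_inv, Real.norm_natCast, inv_mul_eq_div]
  obtain ⟨N, hN⟩ := eventually_atTop.1 (hmean.and (eventually_gt_atTop 0))
  refine ⟨N, (frequently_forall_mul_sub_lt hlin (sub_lt_self _ hε)).mono fun n hn k hNk hkn => ?_⟩
  have hadd := add_le_norm_smul_add_smul_of_forall_mul_sub_lt hx (hN k hNk).2 hkn hn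
  obtain ⟨hmean_n, hn0⟩ := hN n (hNk.trans hkn)
  refine hconvex _ _ (hN k hNk).1 hmean_n (hadd.trans' ?_)
  rw [two_mul, add_sub_assoc]
  gcongr
  exact hle n hn0

theorem cauchySeq_inv_smul_sub_zero_of_nonexpansive
    (hx : ∀ i j, ‖x (i + 1) - x (j + 1)‖ ≤ ‖x i - x j‖) :
    CauchySeq fun n : ℕ => (n : ℝ)⁻¹ • (x n - x 0) := by
  refine Metric.cauchySeq_iff'.2 fun δ hδ => ?_
  obtain ⟨N, hN⟩ := exists_frequently_forall_norm_sub_lt_of_nonexpansive hx (half_pos hδ)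
  refine ⟨N, fun k hk => ?_⟩
  obtain ⟨n, hkn, hn⟩ := hN.forall_exists_of_atTop k
  have hdist_k := hn k hk hkn
  have hdist_N := hn N le_rfl (hk.trans hkn)
  rw [← dist_eq_norm] at hdist_k hdist_N
  exact (dist_triangle_right _ _ _).trans_lt ((add_lt_add hdist_k hdist_N).trans_eq (add_halves δ))

theorem exists_forall_core_inner_self_lt_of_nonexpansive {M : Type*} [AddCommGroup M] [Module ℝ M]
    (c : PreInnerProductSpace.Core ℝ M) {x : ℕ → M}
    (hx : ∀ i j, c.inner (x (i + 1) - x (j + 1)) (x (i + 1) - x (j + 1)) ≤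
      c.inner (x i - x j) (x i - x j)) {ε : ℝ} (hε : 0 < ε) :
    ∃ N : ℕ, ∀ m ≥ N, ∀ n ≥ N,
      c.inner ((m : ℝ)⁻¹ • (x m - x 0) - (n : ℝ)⁻¹ • (x n - x 0))
        ((m : ℝ)⁻¹ • (x m - x 0) - (n : ℝ)⁻¹ • (x n - x 0)) < ε := by
  let _ : SeminormedAddCommGroup M := InnerProductSpace.Core.toSeminormedAddCommGroup (𝕜 := ℝ)
  let _ : InnerProductSpace ℝ M := InnerProductSpace.ofCore c
  have hnorm (u : M) : ‖u‖ = √(c.inner u u) := rfl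
  have hcauchy := cauchySeq_inv_smul_sub_zero_of_nonexpansive (x := x) fun i j => by
    rw [hnorm, hnorm]
    exact Real.sqrt_le_sqrt (hx i j)
  obtain ⟨N, hN⟩ := Metric.cauchySeq_iff.1 hcauchy √ε (Real.sqrt_pos.2 hε)
  refine ⟨N, fun m hm n hn => ?_⟩
  have hlt := hN m hm n hn
  rw [dist_eq_norm, hnorm] at hlt
  exact (Real.sqrt_lt_sqrt_iff (c.re_inner_nonneg _)).1 hlt

end Pazy

section CesaroMeans

variable {E : Type*} [NormedAddCommGroup E] [NormedSpace ℝ E] {x : ℕ → E} {l : E}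

theorem tendsto_inv_smul_const (e : E) :
    Tendsto (fun n : ℕ => (n : ℝ)⁻¹ • e) atTop (𝓝 0) := by
  simpa using (tendsto_inv_atTop_nhds_zero_nat (𝕜 := ℝ)).smul_const e

theorem tendsto_inv_smul_of_tendsto_sub (hx : Tendsto (fun n => x (n + 1) - x n) atTop (𝓝 l)) :
    Tendsto (fun n : ℕ => (n : ℝ)⁻¹ • x n) atTop (𝓝 l) := by
  have hmean := hx.cesaro_smul.add (tendsto_inv_smul_const (x 0))
  simpa only [Finset.sum_range_sub, ← smul_add, sub_add_cancel, add_zero] using hmean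

theorem tendsto_inv_smul_succ (hx : Tendsto (fun n : ℕ => (n : ℝ)⁻¹ • x n) atTop (𝓝 l)) :
    Tendsto (fun n : ℕ => (n : ℝ)⁻¹ • x (n + 1)) atTop (𝓝 l) := by
  have hratio : Tendsto (fun n : ℕ => 1 + (n : ℝ)⁻¹) atTop (𝓝 1) := by
    simpa using (tendsto_inv_atTop_nhds_zero_nat (𝕜 := ℝ)).const_add 1
  have hprod := hratio.smul (hx.comp (tendsto_add_atTop_nat 1))
  rw [one_smul] at hprod
  refine hprod.congr' ?_
  filter_upwards [eventually_gt_atTop 0] with n hn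
  have hn0 : (n : ℝ) ≠ 0 := by positivity
  simp only [Function.comp_apply, smul_smul]
  congr 1
  push_cast
  field_simp

theorem le_of_tendsto_inv_mul_of_sub_le {s a : ℕ → ℝ} {L c : ℝ}
    (hs : Tendsto (fun n : ℕ => (n : ℝ)⁻¹ * s n) atTop (𝓝 L)) (ha : Tendsto a atTop (𝓝 c))
    (hsa : ∀ n, s (n + 1) - s n ≤ a n) : L ≤ c := by
  have hmean := ha.cesaro.add (tendsto_inv_smul_const (s 0))
  rw [add_zero] at hmean
  refine le_of_tendsto_of_tendsto' hs hmean fun n => ?_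
  rw [smul_eq_mul, ← mul_add]
  gcongr
  linarith [Finset.sum_range_sub s n, Finset.sum_le_sum fun i (_ : i ∈ Finset.range n) => hsa i]

theorem mem_recCone_of_tendsto_inv_smul {D : Set E} (hcl : IsClosed D) (hconv : Convex ℝ D)
    (hD : ∀ n, x n ∈ D) (hx : Tendsto (fun n : ℕ => (n : ℝ)⁻¹ • x n) atTop (𝓝 l)) :
    l ∈ recCone D := fun y hy => by
  have hcomb : Tendsto (fun n : ℕ => (n : ℝ)⁻¹ • x n + (1 - (n : ℝ)⁻¹) • y) atTop (𝓝 (l + y)) := by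
    simpa using hx.add (((tendsto_inv_atTop_nhds_zero_nat (𝕜 := ℝ)).const_sub 1).smul_const y)
  refine hcl.mem_of_tendsto hcomb ?_
  filter_upwards [eventually_gt_atTop 0] with n hn
  exact hconv (hD n) hy (by positivity) (sub_nonneg.2 (Nat.cast_inv_le_one n)) (by ring)

theorem mem_of_tendsto_inv_smul {C : Set E} (hcl : IsClosed C)
    (hcone : ∀ y ∈ C, ∀ a : ℝ, 0 ≤ a → a • y ∈ C) (hC : ∀ n, x n ∈ C)
    (hx : Tendsto (fun n : ℕ => (n : ℝ)⁻¹ • x n) atTop (𝓝 l)) : l ∈ C :=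
  hcl.mem_of_tendsto hx <| .of_forall fun n => hcone _ (hC n) _ (by positivity)

end CesaroMeans

section PositiveOperators

variable {E : Type*} [NormedAddCommGroup E] [InnerProductSpace ℝ E]

theorem map_eq_zero_of_inner_map_self_eq_zero {P : E →L[ℝ] E} (hP : P.IsPositive) {x : E}
    (hx : ⟪P x, x⟫ = 0) : P x = 0 := by
  have hker := (LinearMap.BilinForm.apply_apply_same_eq_zero_iff (innerₗ E ∘ₗ (P : E →ₗ[ℝ] E))
    hP.inner_nonneg_left ⟨fun u v => (hP.inner_left_eq_inner_right u v).trans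
      (real_inner_comm _ _)⟩).1 hx
  exact inner_self_eq_zero.1 (LinearMap.congr_fun hker (P x))

end PositiveOperators

section Energy

variable {E F : Type*} [NormedAddCommGroup E] [InnerProductSpace ℝ E]
  [NormedAddCommGroup F] [InnerProductSpace ℝ F]

/-- The quadratic form `‖x‖² - 2 ⟪T x, y⟫ + ‖y‖²` on `E × F`, the squared (semi)norm in which the
PIPG iteration with unit step size and constraint operator `T` is nonexpansive. -/
def energy (T : E →L[ℝ] F) (x : E) (y : F) : ℝ := ‖x‖ ^ 2 + ‖y‖ ^ 2 - 2 * ⟪T x, y⟫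

theorem sq_norm_sub_norm_le_energy {T : E →L[ℝ] F} (hT : ‖T‖ ≤ 1) (x : E) (y : F) :
    (‖y‖ - ‖x‖) ^ 2 ≤ energy T x y := by
  have hTx : ‖T x‖ ≤ ‖x‖ := by simpa using T.le_of_opNorm_le hT x
  have hinner : ⟪T x, y⟫ ≤ ‖x‖ * ‖y‖ := (real_inner_le_norm _ _).trans (by gcongr)
  rw [energy]
  linarith

theorem energy_nonneg {T : E →L[ℝ] F} (hT : ‖T‖ ≤ 1) (x : E) (y : F) : 0 ≤ energy T x y :=
  (sq_nonneg _).trans (sq_norm_sub_norm_le_energy hT x y)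

theorem norm_le_norm_add_sqrt_energy {T : E →L[ℝ] F} (hT : ‖T‖ ≤ 1) (x : E) (y : F) :
    ‖y‖ ≤ ‖x‖ + √(energy T x y) := by
  linarith [(le_abs_self _).trans (Real.abs_le_sqrt (sq_norm_sub_norm_le_energy hT x y))]

theorem energy_add (T : E →L[ℝ] F) (x a : E) (y b : F) :
    energy T (x + a) (y + b) = energy T x y + energy T a b +
      2 * (⟪x, a⟫ + ⟪y, b⟫ - ⟪T x, b⟫ - ⟪T a, y⟫) := by
  simp only [energy, norm_add_sq_real, map_add, inner_add_left, inner_add_right]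
  ring

theorem half_inner_map_self_le_energy {P : E →L[ℝ] E} {T : E →L[ℝ] F}
    (hPT : ‖P‖ / 2 + ‖T‖ ^ 2 ≤ 1) (x : E) (y : F) : ⟪P x, x⟫ / 2 ≤ energy T x y := by
  have hP : ⟪P x, x⟫ ≤ ‖P‖ * ‖x‖ ^ 2 :=
    calc ⟪P x, x⟫ ≤ ‖P x‖ * ‖x‖ := real_inner_le_norm _ _
      _ ≤ ‖P‖ * ‖x‖ * ‖x‖ := by gcongr; exact P.le_opNorm x
      _ = ‖P‖ * ‖x‖ ^ 2 := by ring
  have hT : ‖T x‖ ^ 2 ≤ ‖T‖ ^ 2 * ‖x‖ ^ 2 := by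
    rw [← mul_pow]
    gcongr
    exact T.le_opNorm x
  have hsq : energy T x y = ‖x‖ ^ 2 - ‖T x‖ ^ 2 + ‖T x - y‖ ^ 2 := by
    rw [energy, norm_sub_sq_real]
    ring
  rw [hsq]
  linarith [mul_le_mul_of_nonneg_right hPT (sq_nonneg ‖x‖), sq_nonneg ‖T x - y‖]

theorem opNorm_le_one_of_half_opNorm_add_sq_le_one {P : E →L[ℝ] E} {T : E →L[ℝ] F}
    (hPT : ‖P‖ / 2 + ‖T‖ ^ 2 ≤ 1) : ‖T‖ ≤ 1 :=
  (sq_le_one_iff₀ (norm_nonneg T)).1 (by linarith [norm_nonneg P])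

/-- The bilinear form whose quadratic form is `energy T`, as a semi-inner product on `E × F`. -/
abbrev energyCore (T : E →L[ℝ] F) (hT : ‖T‖ ≤ 1) : PreInnerProductSpace.Core ℝ (E × F) where
  inner u v := ⟪u.1, v.1⟫ + ⟪u.2, v.2⟫ - ⟪T u.1, v.2⟫ - ⟪T v.1, u.2⟫
  conj_inner_symm u v := by
    simp only [conj_trivial, real_inner_comm u.1, real_inner_comm u.2]
    ring
  re_inner_nonneg u := by
    have h := energy_nonneg hT u.1 u.2
    simp only [energy, RCLike.re_to_real, real_inner_self_eq_norm_sq] at h ⊢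
    linarith
  add_left u v s := by
    simp only [Prod.fst_add, Prod.snd_add, map_add, inner_add_left, inner_add_right]
    ring
  smul_left u v a := by
    simp only [Prod.smul_fst, Prod.smul_snd, map_smul, real_inner_smul_left,
      real_inner_smul_right, conj_trivial]
    ring

theorem energyCore_inner_self {T : E →L[ℝ] F} (hT : ‖T‖ ≤ 1) (u : E × F) :
    (energyCore T hT).inner u u = energy T u.1 u.2 := by
  change ⟪u.1, u.1⟫ + ⟪u.2, u.2⟫ - ⟪T u.1, u.2⟫ - ⟪T u.1, u.2⟫ = _
  rw [energy, real_inner_self_eq_norm_sq, real_inner_self_eq_norm_sq]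
  ring

theorem energy_add_half_inner_map_le [CompleteSpace E] [CompleteSpace F] {P : E →L[ℝ] E}
    {T : E →L[ℝ] F} (hP : (P : E →ₗ[ℝ] E).IsSymmetric) (hPT : ‖P‖ / 2 + ‖T‖ ^ 2 ≤ 1)
    {x x' : E} {y y' : F} (hprimal : 0 ≤ ⟪x - x' - (P x + adjoint T y), x'⟫)
    (hdual : 0 ≤ ⟪y - y' + T (x' + (x' - x)), y'⟫) :
    energy T x' y' + ⟪P (x + x'), x + x'⟫ / 2 ≤ energy T x y := by
  have hsymm : ⟪P x', x⟫ = ⟪P x, x'⟫ := (hP x' x).trans (real_inner_comm _ _)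
  have hsplit := energy_add T (x - x') x' (y - y') y'
  have hdiff := half_inner_map_self_le_energy hPT (x - x') (y - y')
  rw [sub_add_cancel, sub_add_cancel] at hsplit
  have hprimal' : ⟪P x, x'⟫ + ⟪T x', y⟫ ≤ ⟪x - x', x'⟫ := by
    rw [inner_sub_left, inner_add_left, adjoint_inner_left, real_inner_comm (T x')] at hprimal
    linarith
  have hdual' : ⟪T (x - x'), y'⟫ - ⟪T x', y'⟫ ≤ ⟪y - y', y'⟫ := by
    rw [← neg_sub x x', map_add, map_neg, inner_add_left, inner_add_left, inner_neg_left] at hdual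
    linarith
  rw [hsplit]
  simp only [map_add, map_sub, inner_add_left, inner_sub_left, inner_sub_right, inner_add_right,
    hsymm] at hdiff hprimal' hdual' ⊢
  linarith

end Energy

section PIPG

variable {E F : Type*} [NormedAddCommGroup E] [InnerProductSpace ℝ E] [CompleteSpace E]
  [NormedAddCommGroup F] [InnerProductSpace ℝ F] [CompleteSpace F]

/-- Optimality conditions of the two projections defining the PIPG iteration with unit step size
(the step size `α` is absorbed into the data by scaling). The cone `C` plays the role of `K°`; the
auxiliary sequence `v` is eliminated, and `w` is indexed so that `z (i + 1)` is computed from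
`w i`. -/
structure IsPIPGOrbit (P : E →L[ℝ] E) (q : E) (T : E →L[ℝ] F) (g : F) (D : Set E) (C : Set F)
    (z : ℕ → E) (w : ℕ → F) : Prop where
  primal_mem (i : ℕ) : z i ∈ D
  dual_mem (i : ℕ) : w i ∈ C
  primal_step (i : ℕ) :
    z i - z (i + 1) - (P (z i) + q + adjoint T (w i)) ∈ normalCone D (z (i + 1))
  dual_step (i : ℕ) :
    w i - w (i + 1) + (T (z (i + 1) + (z (i + 1) - z i)) - g) ∈ normalCone C (w (i + 1))

namespace IsPIPGOrbit

variable {P : E →L[ℝ] E} {q : E} {T : E →L[ℝ] F} {g : F} {D : Set E} {C : Set F}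
  {z : ℕ → E} {w : ℕ → F} {zbar : E} {wbar : F}

theorem energy_succ_add_half_inner_map_le (h : IsPIPGOrbit P q T g D C z w)
    (hP : (P : E →ₗ[ℝ] E).IsSymmetric) (hPT : ‖P‖ / 2 + ‖T‖ ^ 2 ≤ 1) (i j : ℕ) :
    energy T (z (i + 1) - z (j + 1)) (w (i + 1) - w (j + 1)) +
      ⟪P (z i - z j + (z (i + 1) - z (j + 1))), z i - z j + (z (i + 1) - z (j + 1))⟫ / 2 ≤
      energy T (z i - z j) (w i - w j) := by
  apply energy_add_half_inner_map_le hP hPT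
  · convert inner_sub_sub_nonneg_of_mem_normalCone (h.primal_mem _) (h.primal_mem _)
      (h.primal_step i) (h.primal_step j) using 2
    simp only [map_sub]
    abel
  · convert inner_sub_sub_nonneg_of_mem_normalCone (h.dual_mem _) (h.dual_mem _)
      (h.dual_step i) (h.dual_step j) using 2
    simp only [map_sub, map_add]
    abel

theorem energy_succ_le (h : IsPIPGOrbit P q T g D C z w) (hP : P.IsPositive)
    (hPT : ‖P‖ / 2 + ‖T‖ ^ 2 ≤ 1) (i j : ℕ) :
    energy T (z (i + 1) - z (j + 1)) (w (i + 1) - w (j + 1)) ≤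
      energy T (z i - z j) (w i - w j) := by
  have hnonneg := hP.inner_nonneg_left (z i - z j + (z (i + 1) - z (j + 1)))
  linarith [h.energy_succ_add_half_inner_map_le hP.isSymmetric hPT i j]

theorem antitone_energy_sub (h : IsPIPGOrbit P q T g D C z w) (hP : P.IsPositive)
    (hPT : ‖P‖ / 2 + ‖T‖ ^ 2 ≤ 1) :
    Antitone fun i => energy T (z (i + 1) - z i) (w (i + 1) - w i) :=
  antitone_nat_of_succ_le fun i => h.energy_succ_le hP hPT (i + 1) i

theorem map_limit_eq_zero (h : IsPIPGOrbit P q T g D C z w) (hP : P.IsPositive)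
    (hPT : ‖P‖ / 2 + ‖T‖ ^ 2 ≤ 1)
    (hz : Tendsto (fun i => z (i + 1) - z i) atTop (𝓝 zbar)) : P zbar = 0 := by
  have hT := opNorm_le_one_of_half_opNorm_add_sq_le_one hPT
  have henergy := tendsto_atTop_ciInf (h.antitone_energy_sub hP hPT)
    ⟨0, by rintro _ ⟨i, rfl⟩; exact energy_nonneg hT _ _⟩
  have hdrop := henergy.sub (henergy.comp (tendsto_add_atTop_nat 1))
  have hsum := hz.add (hz.comp (tendsto_add_atTop_nat 1))
  have hquad := (((P.continuous.tendsto _).comp hsum).inner hsum).div_const (2 : ℝ)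
  have hle : ⟪P (zbar + zbar), zbar + zbar⟫ / 2 ≤ 0 := by
    rw [sub_self] at hdrop
    refine le_of_tendsto_of_tendsto' hquad hdrop fun i => le_sub_iff_add_le'.2 ?_
    exact h.energy_succ_add_half_inner_map_le hP.isSymmetric hPT (i + 1) i
  have hnonneg := hP.inner_nonneg_left (zbar + zbar)
  have hzero := map_eq_zero_of_inner_map_self_eq_zero hP (x := zbar + zbar) (by linarith)
  rwa [map_add, ← two_smul ℝ, smul_eq_zero_iff_right two_ne_zero] at hzero

theorem exists_norm_dual_sub_le (h : IsPIPGOrbit P q T g D C z w) (hP : P.IsPositive)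
    (hPT : ‖P‖ / 2 + ‖T‖ ^ 2 ≤ 1)
    (hz : Tendsto (fun i => z (i + 1) - z i) atTop (𝓝 zbar)) :
    ∃ R, ∀ i, ‖w (i + 1) - w i‖ ≤ R := by
  have hT := opNorm_le_one_of_half_opNorm_add_sq_le_one hPT
  obtain ⟨r, hr⟩ := hz.norm.bddAbove_range
  refine ⟨r + √(energy T (z 1 - z 0) (w 1 - w 0)), fun i => ?_⟩
  refine (norm_le_norm_add_sqrt_energy hT _ _).trans (add_le_add (hr ⟨i, rfl⟩) ?_)
  exact Real.sqrt_le_sqrt (h.antitone_energy_sub hP hPT i.zero_le)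

theorem tendsto_inner_dual_sub (h : IsPIPGOrbit P q T g D C z w) (hP : P.IsPositive)
    (hPT : ‖P‖ / 2 + ‖T‖ ^ 2 ≤ 1)
    (hz : Tendsto (fun i => z (i + 1) - z i) atTop (𝓝 zbar)) {y : ℕ → F}
    (hy : Tendsto y atTop (𝓝 0)) :
    Tendsto (fun i => ⟪w (i + 1) - w i, y i⟫) atTop (𝓝 0) := by
  obtain ⟨R, hR⟩ := h.exists_norm_dual_sub_le hP hPT hz
  refine squeeze_zero_norm (fun i => (norm_inner_le_norm _ _).trans ?_)
    (by simpa using hy.norm.const_mul R)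
  gcongr
  exact hR i

theorem exists_tendsto_inv_smul_dual (h : IsPIPGOrbit P q T g D C z w) (hP : P.IsPositive)
    (hPT : ‖P‖ / 2 + ‖T‖ ^ 2 ≤ 1)
    (hz : Tendsto (fun n : ℕ => (n : ℝ)⁻¹ • z n) atTop (𝓝 zbar)) :
    ∃ wbar, Tendsto (fun n : ℕ => (n : ℝ)⁻¹ • w n) atTop (𝓝 wbar) := by
  have hT := opNorm_le_one_of_half_opNorm_add_sq_le_one hPT
  have hz0 : CauchySeq fun n : ℕ => (n : ℝ)⁻¹ • (z n - z 0) := by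
    simpa only [smul_sub] using (hz.sub (tendsto_inv_smul_const (z 0))).cauchySeq
  have hw0 : CauchySeq fun n : ℕ => (n : ℝ)⁻¹ • (w n - w 0) := by
    refine Metric.cauchySeq_iff.2 fun ε hε => ?_
    obtain ⟨M, hM⟩ := Metric.cauchySeq_iff.1 hz0 (ε / 2) (half_pos hε)
    obtain ⟨N, hN⟩ := exists_forall_core_inner_self_lt_of_nonexpansive (energyCore T hT)
      (x := fun n => (z n, w n)) (fun i j => by
        rw [energyCore_inner_self, energyCore_inner_self]
        exact h.energy_succ_le hP hPT i j) (pow_pos (half_pos hε) 2)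
    refine ⟨max M N, fun m hm n hn => ?_⟩
    have hprimal := hM m (le_of_max_le_left hm) n (le_of_max_le_left hn)
    have henergy := hN m (le_of_max_le_right hm) n (le_of_max_le_right hn)
    rw [energyCore_inner_self] at henergy
    rw [dist_eq_norm] at hprimal ⊢
    calc _ ≤ _ := norm_le_norm_add_sqrt_energy hT _ _
      _ < ε / 2 + ε / 2 := add_lt_add hprimal ((Real.sqrt_lt' (half_pos hε)).2 henergy)
      _ = ε := add_halves ε
  obtain ⟨wbar, hwbar⟩ := cauchySeq_tendsto_of_complete hw0
  refine ⟨wbar, ?_⟩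
  simpa only [← smul_add, sub_add_cancel, add_zero] using
    hwbar.add (tendsto_inv_smul_const (w 0))

theorem primal_inner_le (h : IsPIPGOrbit P q T g D C z w) {y : E} (hy : y ∈ D) (i : ℕ) :
    ⟪z (i + 1) - z i + P (z i) + q, z (i + 1) - y⟫ + ⟪T (z (i + 1) - y), w i⟫ ≤ 0 := by
  have hstep : ⟪z i - z (i + 1) - (P (z i) + q + adjoint T (w i)), y - z (i + 1)⟫ ≤ 0 :=
    h.primal_step i y hy
  rw [real_inner_comm (w i), ← adjoint_inner_left, ← inner_add_left]
  convert hstep using 1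
  rw [← inner_neg_neg]
  congr 1 <;> abel

theorem dual_inner_le (h : IsPIPGOrbit P q T g D C z w)
    (hcone : ∀ y ∈ C, ∀ a : ℝ, 0 ≤ a → a • y ∈ C) {p : F} (hp : p ∈ C) (i : ℕ) :
    ⟪T (z (i + 1) + (z (i + 1) - z i)) - g, p⟫ ≤ ⟪w (i + 1) - w i, p⟫ := by
  have hstep : ⟪_, p⟫ ≤ (0 : ℝ) :=
    mem_polarCone_of_mem_normalCone hcone (h.dual_mem _) (h.dual_step i) p hp
  rw [← neg_sub (w (i + 1)), inner_add_left, inner_neg_left] at hstep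
  linarith

theorem dual_inner_eq (h : IsPIPGOrbit P q T g D C z w)
    (hcone : ∀ y ∈ C, ∀ a : ℝ, 0 ≤ a → a • y ∈ C) (i : ℕ) :
    ⟪T (z (i + 1) + (z (i + 1) - z i)) - g, w (i + 1)⟫ = ⟪w (i + 1) - w i, w (i + 1)⟫ := by
  have hstep := inner_eq_zero_of_mem_normalCone hcone (h.dual_mem _) (h.dual_step i)
  rw [← neg_sub (w (i + 1)), inner_add_left, inner_neg_left] at hstep
  linarith

theorem gap_le (h : IsPIPGOrbit P q T g D C z w) (hP : P.IsPositive)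
    (hcone : ∀ y ∈ C, ∀ a : ℝ, 0 ≤ a → a • y ∈ C) {y : E} (hy : y ∈ D) (i : ℕ) :
    ⟪w (i + 1) - w i, w (i + 1)⟫ + ⟪g - T y, w (i + 1)⟫ +
      ⟪T (z (i + 2) - z (i + 1) - (z (i + 1) - z i)), w (i + 1)⟫ +
      ⟪z (i + 2) - z (i + 1) + q, z (i + 2) - y⟫ +
      ⟪P (z (i + 1)), z (i + 2) - z (i + 1) - y⟫ ≤ 0 := by
  have hprimal := h.primal_inner_le hy (i + 1)
  have hdual := h.dual_inner_eq hcone i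
  have hsplit : ⟪T (z (i + 2) - y), w (i + 1)⟫ =
      ⟪w (i + 1) - w i, w (i + 1)⟫ + ⟪g - T y, w (i + 1)⟫ +
        ⟪T (z (i + 2) - z (i + 1) - (z (i + 1) - z i)), w (i + 1)⟫ := by
    rw [← hdual, ← inner_add_left, ← inner_add_left]
    congr 1
    simp only [map_add, map_sub]
    abel
  have hquad : ⟪P (z (i + 1)), z (i + 2) - y⟫ =
      ⟪P (z (i + 1)), z (i + 1)⟫ + ⟪P (z (i + 1)), z (i + 2) - z (i + 1) - y⟫ := by
    rw [← inner_add_right]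
    congr 1
    abel
  rw [add_right_comm, inner_add_left _ (P _), hquad, hsplit] at hprimal
  linarith [hP.inner_nonneg_left (z (i + 1))]

theorem inner_dual_sub_le (h : IsPIPGOrbit P q T g D C z w) (hP : P.IsPositive)
    (hcone : ∀ y ∈ C, ∀ a : ℝ, 0 ≤ a → a • y ∈ C) {y : E} (hy : y ∈ D) (p : F) {t : ℝ} (ht : 0 ≤ t)
    (i : ℕ) :
    ⟪w (i + 1), p⟫ - ⟪w i, p⟫ ≤
      -(⟪w (i + 1) - w i, t • w (i + 1) - p⟫ + ⟪g - T y, t • w (i + 1)⟫ +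
        ⟪T (z (i + 2) - z (i + 1) - (z (i + 1) - z i)), t • w (i + 1)⟫ +
        ⟪z (i + 2) - z (i + 1) + q, t • z (i + 2) - t • y⟫ +
        ⟪P (t • z (i + 1)), z (i + 2) - z (i + 1) - y⟫) := by
  have hgap := mul_nonpos_of_nonneg_of_nonpos ht (h.gap_le hP hcone hy i)
  rw [← inner_sub_left, inner_sub_right _ _ p, ← smul_sub, map_smul]
  simp only [real_inner_smul_left, real_inner_smul_right]
  linarith

theorem sq_norm_limits_add_inner_le (h : IsPIPGOrbit P q T g D C z w) (hP : P.IsPositive)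
    (hPT : ‖P‖ / 2 + ‖T‖ ^ 2 ≤ 1) (hcone : ∀ y ∈ C, ∀ a : ℝ, 0 ≤ a → a • y ∈ C)
    (hz : Tendsto (fun i => z (i + 1) - z i) atTop (𝓝 zbar))
    (hw : Tendsto (fun n : ℕ => (n : ℝ)⁻¹ • w n) atTop (𝓝 wbar)) {y : E} (hy : y ∈ D) :
    ‖wbar‖ ^ 2 + ‖zbar‖ ^ 2 + ⟪q, zbar⟫ ≤ ⟪T y - g, wbar⟫ := by
  have hz_succ : Tendsto (fun n => z (n + 2) - z (n + 1)) atTop (𝓝 zbar) :=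
    hz.comp (tendsto_add_atTop_nat 1)
  have hw_mean := tendsto_inv_smul_succ hw
  have hz_mean := tendsto_inv_smul_succ (tendsto_inv_smul_of_tendsto_sub hz)
  have hPz : Tendsto (fun n : ℕ => P ((n : ℝ)⁻¹ • z (n + 1))) atTop (𝓝 0) := by
    rw [← h.map_limit_eq_zero hP hPT hz]
    exact (P.continuous.tendsto _).comp hz_mean
  have hTz : Tendsto (fun n => T (z (n + 2) - z (n + 1) - (z (n + 1) - z n))) atTop (𝓝 0) := by
    rw [← map_zero T, ← sub_self zbar]
    exact (T.continuous.tendsto _).comp (hz_succ.sub hz)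
  have herror := h.tendsto_inner_dual_sub hP hPT hz (sub_self wbar ▸ hw_mean.sub_const wbar)
  have hconstraint := (tendsto_const_nhds (x := g - T y)).inner (𝕜 := ℝ) hw_mean
  have hcost := (hz_succ.add_const q).inner (𝕜 := ℝ)
    ((tendsto_inv_smul_succ hz_mean).sub (tendsto_inv_smul_const y))
  have hbound := ((((herror.add hconstraint).add (hTz.inner hw_mean)).add hcost).add
    (hPz.inner (hz_succ.sub_const y))).neg
  have hlim : Tendsto (fun n : ℕ => (n : ℝ)⁻¹ * ⟪w n, wbar⟫) atTop (𝓝 (‖wbar‖ ^ 2)) := by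
    simpa only [real_inner_smul_left, real_inner_self_eq_norm_sq] using
      hw.inner (𝕜 := ℝ) (tendsto_const_nhds (x := wbar))
  have hle := le_of_tendsto_inv_mul_of_sub_le hlim hbound fun n =>
    h.inner_dual_sub_le hP hcone hy wbar (inv_nonneg.2 n.cast_nonneg) n
  simp only [inner_zero_left, sub_zero, inner_add_left, real_inner_self_eq_norm_sq] at hle
  rw [← neg_sub, inner_neg_left]
  linarith

theorem sq_norm_limit_add_inner_le (h : IsPIPGOrbit P q T g D C z w) (hP : P.IsPositive)
    (hPT : ‖P‖ / 2 + ‖T‖ ^ 2 ≤ 1) (hcl : IsClosed C) (hcone : ∀ y ∈ C, ∀ a : ℝ, 0 ≤ a → a • y ∈ C)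
    (hz : Tendsto (fun i => z (i + 1) - z i) atTop (𝓝 zbar))
    (hw : Tendsto (fun n : ℕ => (n : ℝ)⁻¹ • w n) atTop (𝓝 wbar)) :
    ‖zbar‖ ^ 2 + ⟪q, zbar⟫ ≤ -⟪T zbar, wbar⟫ := by
  have hwbar : wbar ∈ C := mem_of_tendsto_inv_smul hcl hcone h.dual_mem hw
  have hlim : Tendsto (fun n : ℕ => (n : ℝ)⁻¹ * ⟪w n, -wbar⟫) atTop (𝓝 (-‖wbar‖ ^ 2)) := by
    simpa only [real_inner_smul_left, inner_neg_right, mul_neg, real_inner_self_eq_norm_sq] using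
      hw.inner (𝕜 := ℝ) (tendsto_const_nhds (x := -wbar))
  have hbound := ((((T.continuous.tendsto _).comp hz).inner (𝕜 := ℝ)
    (tendsto_const_nhds (x := wbar))).const_add (‖wbar‖ ^ 2 + ‖zbar‖ ^ 2 + ⟪q, zbar⟫)).neg
  have hle := le_of_tendsto_inv_mul_of_sub_le hlim hbound fun i => by
    have hgap := h.sq_norm_limits_add_inner_le hP hPT hcone hz hw (h.primal_mem (i + 1))
    have hdual := h.dual_inner_le hcone hwbar i
    rw [map_add, add_sub_right_comm, inner_add_left, inner_sub_left (w _)] at hdual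
    rw [inner_neg_right, inner_neg_right, Function.comp_apply]
    linarith
  linarith

theorem inner_map_limit_nonneg (h : IsPIPGOrbit P q T g D C z w) (hP : P.IsPositive)
    (hPT : ‖P‖ / 2 + ‖T‖ ^ 2 ≤ 1) (hDcl : IsClosed D) (hD : Convex ℝ D)
    (hz : Tendsto (fun i => z (i + 1) - z i) atTop (𝓝 zbar))
    (hw : Tendsto (fun n : ℕ => (n : ℝ)⁻¹ • w n) atTop (𝓝 wbar)) : 0 ≤ ⟪T zbar, wbar⟫ := by
  have hz_mean := tendsto_inv_smul_of_tendsto_sub hz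
  have hrec := mem_recCone_of_tendsto_inv_smul hDcl hD h.primal_mem hz_mean
  have hPz (x : E) : ⟪P x, zbar⟫ = 0 := by
    rw [hP.inner_left_eq_inner_right, h.map_limit_eq_zero hP hPT hz, inner_zero_right]
  have hprimal (i : ℕ) : -⟪z (i + 1) - z i + q, zbar⟫ ≤ ⟪T zbar, w i⟫ := by
    have hle := h.primal_inner_le (hrec _ (h.primal_mem (i + 1))) i
    rw [sub_add_cancel_right, map_neg, inner_neg_right, inner_neg_left, add_right_comm,
      inner_add_left _ (P _), hPz, add_zero] at hle
    linarith
  have hcost := (tendsto_inv_atTop_nhds_zero_nat (𝕜 := ℝ)).mul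
    ((hz.add_const q).inner (𝕜 := ℝ) (tendsto_const_nhds (x := zbar))).neg
  rw [zero_mul] at hcost
  refine le_of_tendsto_of_tendsto' hcost ((tendsto_const_nhds (x := T zbar)).inner hw) fun n => ?_
  rw [real_inner_smul_right]
  exact mul_le_mul_of_nonneg_left (hprimal n) (by positivity)

theorem map_limit_mem_polarCone (h : IsPIPGOrbit P q T g D C z w)
    (hcone : ∀ y ∈ C, ∀ a : ℝ, 0 ≤ a → a • y ∈ C)
    (hz : Tendsto (fun i => z (i + 1) - z i) atTop (𝓝 zbar))
    (hw : Tendsto (fun n : ℕ => (n : ℝ)⁻¹ • w n) atTop (𝓝 wbar)) :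
    T zbar ∈ polarCone C := fun p hp => by
  have hp' : Tendsto (fun _ : ℕ => p) atTop (𝓝 p) := tendsto_const_nhds
  have hz_mean := tendsto_inv_smul_succ (tendsto_inv_smul_of_tendsto_sub hz)
  have hincrement : Tendsto (fun n : ℕ => (n : ℝ)⁻¹ • (z (n + 1) - z n)) atTop (𝓝 0) := by
    simpa only [zero_smul] using (tendsto_inv_atTop_nhds_zero_nat (𝕜 := ℝ)).smul hz
  have hdual : Tendsto (fun n : ℕ => (n : ℝ)⁻¹ • (w (n + 1) - w n)) atTop (𝓝 0) := by
    simpa only [smul_sub, sub_self] using (tendsto_inv_smul_succ hw).sub hw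
  have hconstraint : Tendsto
      (fun n : ℕ => (n : ℝ)⁻¹ • (T (z (n + 1) + (z (n + 1) - z n)) - g)) atTop (𝓝 (T zbar)) := by
    simpa only [smul_sub, ← map_smul, smul_add, add_zero, sub_zero, Function.comp_def] using
      ((T.continuous.tendsto _).comp (hz_mean.add hincrement)).sub (tendsto_inv_smul_const g)
  rw [← inner_zero_left (𝕜 := ℝ) p]
  refine le_of_tendsto_of_tendsto' (hconstraint.inner hp') (hdual.inner hp') fun n => ?_
  rw [real_inner_smul_left, real_inner_smul_left]
  exact mul_le_mul_of_nonneg_left (h.dual_inner_le hcone hp n) (by positivity)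

theorem limit_spec (h : IsPIPGOrbit P q T g D C z w) (hP : P.IsPositive)
    (hPT : ‖P‖ / 2 + ‖T‖ ^ 2 ≤ 1) (hDcl : IsClosed D) (hD : Convex ℝ D) (hCcl : IsClosed C)
    (hcone : ∀ y ∈ C, ∀ a : ℝ, 0 ≤ a → a • y ∈ C)
    (hz : Tendsto (fun i => z (i + 1) - z i) atTop (𝓝 zbar)) :
    zbar ∈ recCone D ∧ T zbar ∈ polarCone C ∧ P zbar = 0 ∧ ⟪q, zbar⟫ ≤ -‖zbar‖ ^ 2 := by
  have hz_mean := tendsto_inv_smul_of_tendsto_sub hz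
  obtain ⟨wbar, hw⟩ := h.exists_tendsto_inv_smul_dual hP hPT hz_mean
  refine ⟨mem_recCone_of_tendsto_inv_smul hDcl hD h.primal_mem hz_mean,
    h.map_limit_mem_polarCone hcone hz hw, h.map_limit_eq_zero hP hPT hz, ?_⟩
  linarith [h.sq_norm_limit_add_inner_le hP hPT hCcl hcone hz hw,
    h.inner_map_limit_nonneg hP hPT hDcl hD hz hw]

end IsPIPGOrbit

end PIPG

section StepSize

theorem mul_half_add_sq_le_one {α lam ν γ : ℝ} (hlam : 0 ≤ lam) (hγ : 0 < γ) (hγ1 : γ ≤ 1)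
    (hα0 : 0 < α) (hα : α ≤ (8 - 4 / γ) / (√(lam ^ 2 + 16 * ν ^ 2) + lam)) :
    α * lam / 2 + (α * ν) ^ 2 ≤ 1 := by
  set s : ℝ := √(lam ^ 2 + 16 * ν ^ 2)
  have hs : s ^ 2 = lam ^ 2 + 16 * ν ^ 2 := Real.sq_sqrt (by positivity)
  have hpos : 0 < s + lam := by
    refine lt_of_le_of_ne (by positivity) fun h0 => hα0.not_ge ?_
    rwa [← h0, div_zero] at hα
  have hγ4 : 4 ≤ 4 / γ := (le_div_iff₀ hγ).2 (by linarith)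
  have hαs : α * s ≤ 4 - α * lam := by linarith [(le_div_iff₀ hpos).1 hα]
  have hsq : (α * s) ^ 2 ≤ (4 - α * lam) ^ 2 := pow_le_pow_left₀ (by positivity) hαs 2
  rw [mul_pow, hs] at hsq
  linarith

theorem smul_half_opNorm_add_sq_le_one {E F : Type*} [NormedAddCommGroup E] [NormedSpace ℝ E]
    [NormedAddCommGroup F] [NormedSpace ℝ F] {P : E →L[ℝ] E} {H : E →L[ℝ] F} {α lam ν γ : ℝ}
    (hγ : 0 < γ) (hγ1 : γ ≤ 1) (hlam : ‖P‖ ≤ lam) (hν : ‖H‖ ≤ ν) (hα0 : 0 < α)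
    (hα : α ≤ (8 - 4 / γ) / (√(lam ^ 2 + 16 * ν ^ 2) + lam)) :
    α * ‖P‖ / 2 + (α * ‖H‖) ^ 2 ≤ 1 :=
  calc α * ‖P‖ / 2 + (α * ‖H‖) ^ 2 ≤ α * lam / 2 + (α * ν) ^ 2 := by gcongr
    _ ≤ 1 := mul_half_add_sq_le_one ((norm_nonneg P).trans hlam) hγ hγ1 hα0 hα

end StepSize

section Projections

variable {E F : Type*} [NormedAddCommGroup E] [InnerProductSpace ℝ E] [CompleteSpace E]
  [NormedAddCommGroup F] [InnerProductSpace ℝ F] [CompleteSpace F]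

theorem IsPIPGOrbit.of_proj {α : ℝ} {P : E →L[ℝ] E} {q : E} {H : E →L[ℝ] F} {g : F} {D : Set E}
    (hDne : D.Nonempty) (hDcl : IsClosed D) (hDconv : Convex ℝ D) {K : Set F} {w v : ℕ → F}
    {z : ℕ → E} (hw : ∀ j, w (j + 1) = _root_.proj (polarCone K) (v j + α • (H (z j) - g)))
    (hz : ∀ j, z (j + 1) = _root_.proj D (z j - α • (P (z j) + q + adjoint H (w (j + 1)))))
    (hv : ∀ j, v (j + 1) = w (j + 1) + α • H (z (j + 1) - z j)) :
    IsPIPGOrbit (α • P) (α • q) (α • H) (α • g) D (polarCone K) (fun i => z (i + 1))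
      (fun i => w (i + 2)) := by
  have hprimal := fun j => proj_mem_and_sub_proj_mem_normalCone hDne hDcl hDconv
    (z j - α • (P (z j) + q + adjoint H (w (j + 1))))
  have hdual := fun j => proj_mem_and_sub_proj_mem_normalCone ⟨0, zero_mem_polarCone K⟩
    (isClosed_polarCone K) (convex_polarCone K) (v j + α • (H (z j) - g))
  simp only [← hz, ← hw] at hprimal hdual
  refine ⟨fun i => (hprimal i).1, fun i => (hdual (i + 1)).1, fun i => ?_, fun i => ?_⟩
  · convert (hprimal (i + 1)).2 using 1
    simp only [map_smul, smul_apply, smul_add]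
    abel
  · convert (hdual (i + 2)).2 using 1
    rw [hv (i + 1)]
    simp only [map_add, map_sub, smul_apply, smul_sub]
    abel

theorem stmt7_general {α : ℝ} (hα0 : 0 < α) {P : E →L[ℝ] E} (hP : P.IsPositive) {q : E}
    {H : E →L[ℝ] F} {g : F} (hα : α * ‖P‖ / 2 + (α * ‖H‖) ^ 2 ≤ 1) {D : Set E}
    (hDne : D.Nonempty) (hDcl : IsClosed D) (hDconv : Convex ℝ D) {K : Set F}
    (hKne : K.Nonempty) (hKcl : IsClosed K) (hKconv : Convex ℝ K)
    (hKcone : ∀ w ∈ K, ∀ a : ℝ, 0 ≤ a → a • w ∈ K) {w v : ℕ → F} {z : ℕ → E}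
    (hw : ∀ j, w (j + 1) = _root_.proj (polarCone K) (v j + α • (H (z j) - g)))
    (hz : ∀ j, z (j + 1) = _root_.proj D (z j - α • (P (z j) + q + adjoint H (w (j + 1)))))
    (hv : ∀ j, v (j + 1) = w (j + 1) + α • H (z (j + 1) - z j)) {zbar : E}
    (hzlim : Tendsto (fun j => z (j + 1) - z j) atTop (𝓝 zbar)) :
    zbar ∈ recCone D ∧ H zbar ∈ K ∧ P zbar = 0 ∧ α * ⟪q, zbar⟫ ≤ -‖zbar‖ ^ 2 := by
  have hαP : ‖α • P‖ / 2 + ‖α • H‖ ^ 2 ≤ 1 := by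
    rwa [norm_smul, norm_smul, Real.norm_of_nonneg hα0.le]
  obtain ⟨hrec, hH, hPz, hq⟩ :=
    (IsPIPGOrbit.of_proj hDne hDcl hDconv hw hz hv).limit_spec (hP.smul_of_nonneg hα0.le) hαP
      hDcl hDconv (isClosed_polarCone K) (fun _ hy _ => smul_mem_polarCone hy)
      (hzlim.comp (tendsto_add_atTop_nat 1))
  refine ⟨hrec, ?_, (smul_eq_zero_iff_right hα0.ne').1 hPz, real_inner_smul_left q zbar α ▸ hq⟩
  rw [← inv_smul_smul₀ hα0.ne' (H zbar)]
  exact hKcone _ (polarCone_polarCone_subset hKne hKcl hKconv hKcone hH) _ (by positivity)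

end Projections

/-- if the limit `z̄` of consecutive differences of the primal PIPG
iterates is nonzero, then `z̄` proves dual infeasibility. -/
theorem stmt7 {n m : ℕ} (α : ℝ)
    (P : EuclideanSpace ℝ (Fin n) →L[ℝ] EuclideanSpace ℝ (Fin n))
    (hPsa : IsSelfAdjoint P) (hPpsd : ∀ x, 0 ≤ ⟪P x, x⟫)
    (q : EuclideanSpace ℝ (Fin n))
    (H : EuclideanSpace ℝ (Fin n) →L[ℝ] EuclideanSpace ℝ (Fin m))
    (g : EuclideanSpace ℝ (Fin m))
    (D : Set (EuclideanSpace ℝ (Fin n)))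
    (hDne : D.Nonempty) (hDcl : IsClosed D) (hDconv : Convex ℝ D)
    (K : Set (EuclideanSpace ℝ (Fin m)))
    (hKne : K.Nonempty) (hKcl : IsClosed K) (hKconv : Convex ℝ K)
    (hKcone : ∀ w ∈ K, ∀ a : ℝ, 0 ≤ a → a • w ∈ K)
    (w v : ℕ → EuclideanSpace ℝ (Fin m))
    (z : ℕ → EuclideanSpace ℝ (Fin n))
    (hw : ∀ j : ℕ, w (j + 1) = proj (polarCone K) (v j + α • (H (z j) - g)))
    (hz : ∀ j : ℕ, z (j + 1) =
      proj D (z j - α • (P (z j) + q + (ContinuousLinearMap.adjoint H) (w (j + 1)))))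
    (hv : ∀ j : ℕ, v (j + 1) = w (j + 1) + α • H (z (j + 1) - z j))
    (γ lam ν : ℝ) (hγ : 1/2 < γ) (hγ1 : γ < 1)
    (hlam : ‖P‖ ≤ lam) (hν : ‖H‖ ≤ ν) (hα0 : 0 < α)
    (hα : α ≤ (8 - 4/γ) / (Real.sqrt (lam^2 + 16*ν^2) + lam))
    (zbar : EuclideanSpace ℝ (Fin n))
    (hzlim : Tendsto (fun j : ℕ => z (j + 1) - z j) atTop (𝓝 zbar))
    (hzpos : 0 < ‖zbar‖) :
    zbar ∈ recCone D ∧ H zbar ∈ K ∧ P zbar = 0 ∧ ⟪q, zbar⟫ < 0 := by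
  obtain ⟨hrec, hH, hP, hq⟩ := stmt7_general hα0 ((isPositive_iff' P).2 ⟨hPsa, hPpsd⟩)
    (smul_half_opNorm_add_sq_le_one (one_half_pos.trans hγ) hγ1.le hlam hν hα0 hα) hDne hDcl hDconv
    hKne hKcl hKconv hKcone hw hz hv hzlim
  have hneg : α * ⟪q, zbar⟫ < 0 := hq.trans_lt (neg_neg_of_pos (pow_pos hzpos 2))
  exact ⟨hrec, hH, hP, (smul_neg_iff_of_pos_left hα0).1 hneg⟩
end

section
/- Let D ⊆ ℝⁿ be a nonempty closed convex set and let {y^j} be a sequence in ℝⁿ such that lim_{j→∞} y^j / j = ȳ for some ȳ ∈ ℝⁿ. Then lim_{j→∞} π_D[y^j] / j = π_{rec D}[ȳ], the projection of ȳ onto the recession cone of D. -/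
open scoped RealInnerProductSpace
open Filter Topology Metric ContinuousLinearMap

/-!
Fix `d ∈ D` and let `x` be the limit of `t⁻¹ y`. As `t → ∞`, the sets `t⁻¹ (D - d)` decrease to
`rec D`, and the projection of `x` onto `t⁻¹ (D - d)` is `t⁻¹ (π_D[d + t x] - d)`. Projections
onto a decreasing family of closed convex sets converge in norm to that onto the intersection:
the distances from `x` increase to a finite limit, and the Pythagorean inequality bounds the
squared distance between two of the projections by the difference of the squared distances from
`x`. This settles `y = d + t x`. The general case follows because `π_D` is nonexpansive, so the
resulting error is at most `t⁻¹ ‖d + t x - y‖ → 0`.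
-/

section Projection

variable {E : Type*} [NormedAddCommGroup E] [InnerProductSpace ℝ E] {S : Set E} {x p z : E}

lemma proj_mem_and_norm_sub_proj_le (h : ∃ p ∈ S, ∀ z ∈ S, ‖x - p‖ ≤ ‖x - z‖) :
    proj S x ∈ S ∧ ∀ z ∈ S, ‖x - proj S x‖ ≤ ‖x - z‖ := by
  unfold _root_.proj
  rw [dif_pos h]
  exact h.choose_spec

lemma norm_sub_sq_add_norm_sub_sq_le_of_sub_mem_normalCone (hp : x - p ∈ normalCone S p)
    (hz : z ∈ S) : ‖z - p‖ ^ 2 + ‖x - p‖ ^ 2 ≤ ‖x - z‖ ^ 2 := by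
  have hinner : ⟪x - p, z - p⟫ ≤ 0 := hp z hz
  have hexpand := norm_sub_sq_real (x - p) (z - p)
  rw [sub_sub_sub_cancel_right] at hexpand
  linarith

lemma proj_eq_of_sub_mem_normalCone (hpS : p ∈ S) (hp : x - p ∈ normalCone S p) :
    proj S x = p := by
  have hmin : ∀ z ∈ S, ‖x - p‖ ≤ ‖x - z‖ := fun z hz =>
    le_of_sq_le_sq (by
      linarith [norm_sub_sq_add_norm_sub_sq_le_of_sub_mem_normalCone hp hz,
        sq_nonneg ‖z - p‖]) (norm_nonneg _)
  obtain ⟨hmem, hle⟩ := proj_mem_and_norm_sub_proj_le ⟨p, hpS, hmin⟩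
  have hdist : ‖proj S x - p‖ ^ 2 ≤ 0 := by
    have hsq : ‖x - proj S x‖ ^ 2 ≤ ‖x - p‖ ^ 2 := by gcongr; exact hle p hpS
    linarith [norm_sub_sq_add_norm_sub_sq_le_of_sub_mem_normalCone hp hmem]
  simpa [sub_eq_zero] using hdist

variable [CompleteSpace E]

lemma exists_mem_sub_mem_normalCone (hne : S.Nonempty) (hcl : IsClosed S) (hconv : Convex ℝ S)
    (x : E) : ∃ p ∈ S, x - p ∈ normalCone S p := by
  obtain ⟨p, hpS, hp⟩ := exists_norm_eq_iInf_of_complete_convex hne hcl.isComplete hconv x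
  exact ⟨p, hpS, (norm_eq_iInf_iff_real_inner_le_zero hconv hpS).1 hp⟩

lemma proj_mem (hne : S.Nonempty) (hcl : IsClosed S) (hconv : Convex ℝ S) (x : E) :
    proj S x ∈ S := by
  obtain ⟨p, hpS, hp⟩ := exists_mem_sub_mem_normalCone hne hcl hconv x
  rwa [proj_eq_of_sub_mem_normalCone hpS hp]

lemma sub_proj_mem_normalCone (hne : S.Nonempty) (hcl : IsClosed S) (hconv : Convex ℝ S) (x : E) :
    x - proj S x ∈ normalCone S (proj S x) := by
  obtain ⟨p, hpS, hp⟩ := exists_mem_sub_mem_normalCone hne hcl hconv x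
  rwa [proj_eq_of_sub_mem_normalCone hpS hp]

lemma norm_proj_sub_proj_le (hne : S.Nonempty) (hcl : IsClosed S) (hconv : Convex ℝ S) (x y : E) :
    ‖proj S x - proj S y‖ ≤ ‖x - y‖ := by
  set p := proj S x
  set q := proj S y
  have hp : ⟪x - p, q - p⟫ ≤ 0 :=
    sub_proj_mem_normalCone hne hcl hconv x q (proj_mem hne hcl hconv y)
  have hq : ⟪y - q, p - q⟫ ≤ 0 :=
    sub_proj_mem_normalCone hne hcl hconv y p (proj_mem hne hcl hconv x)
  have hsum : ⟪x - y, p - q⟫ - ‖p - q‖ ^ 2 = -⟪x - p, q - p⟫ - ⟪y - q, p - q⟫ := by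
    rw [← real_inner_self_eq_norm_sq, ← inner_neg_right, neg_sub, ← inner_sub_left,
      ← inner_sub_left]
    congr 1
    abel
  have hsq : ‖p - q‖ * ‖p - q‖ ≤ ‖x - y‖ * ‖p - q‖ := by
    linarith [real_inner_le_norm (x - y) (p - q)]
  rcases (norm_nonneg (p - q)).eq_or_lt with hzero | hpos
  · exact hzero ▸ norm_nonneg _
  · exact le_of_mul_le_mul_right hsq hpos

end Projection

section NestedSets

variable {E : Type*} [NormedAddCommGroup E] [InnerProductSpace ℝ E] [CompleteSpace E]
  {ι : Type*} [SemilatticeSup ι] [Nonempty ι] {K : ι → Set E}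

lemma cauchySeq_proj_of_antitone (hK : Antitone K) (hcl : ∀ i, IsClosed (K i))
    (hconv : ∀ i, Convex ℝ (K i)) (hne : (⋂ i, K i).Nonempty) (x : E) :
    CauchySeq fun i => proj (K i) x := by
  obtain ⟨z, hz⟩ := hne
  rw [Set.mem_iInter] at hz
  have hpyth {i : ι} {w : E} (hw : w ∈ K i) :
      ‖w - proj (K i) x‖ ^ 2 + ‖x - proj (K i) x‖ ^ 2 ≤ ‖x - w‖ ^ 2 :=
    norm_sub_sq_add_norm_sub_sq_le_of_sub_mem_normalCone
      (sub_proj_mem_normalCone ⟨z, hz i⟩ (hcl i) (hconv i) x) hw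
  have hgap {i j : ι} (hij : i ≤ j) : ‖proj (K j) x - proj (K i) x‖ ^ 2 ≤
      ‖x - proj (K j) x‖ ^ 2 - ‖x - proj (K i) x‖ ^ 2 :=
    le_sub_iff_add_le.2 (hpyth (hK hij (proj_mem ⟨z, hz j⟩ (hcl j) (hconv j) x)))
  have hmono : Monotone fun i => ‖x - proj (K i) x‖ ^ 2 := fun i j hij =>
    sub_nonneg.1 ((sq_nonneg _).trans (hgap hij))
  have hbdd : BddAbove (Set.range fun i => ‖x - proj (K i) x‖ ^ 2) :=
    ⟨‖x - z‖ ^ 2, Set.forall_mem_range.2 fun i => by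
      linarith [hpyth (hz i), sq_nonneg ‖z - proj (K i) x‖]⟩
  have hcauchy := (tendsto_atTop_ciSup hmono hbdd).cauchySeq
  refine Metric.cauchySeq_iff'.2 fun ε hε => ?_
  obtain ⟨N, hN⟩ := Metric.cauchySeq_iff'.1 hcauchy (ε ^ 2) (by positivity)
  refine ⟨N, fun i hi => ?_⟩
  rw [dist_eq_norm]
  exact lt_of_pow_lt_pow_left₀ 2 hε.le
    ((hgap hi).trans_lt ((le_abs_self _).trans_lt (hN i hi)))

lemma tendsto_proj_iInter_of_antitone (hK : Antitone K) (hcl : ∀ i, IsClosed (K i))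
    (hconv : ∀ i, Convex ℝ (K i)) (hne : (⋂ i, K i).Nonempty) (x : E) :
    Tendsto (fun i => proj (K i) x) atTop (𝓝 (proj (⋂ i, K i) x)) := by
  have hnei (i : ι) : (K i).Nonempty := hne.mono (Set.iInter_subset K i)
  obtain ⟨p, hp⟩ := cauchySeq_tendsto_of_complete (cauchySeq_proj_of_antitone hK hcl hconv hne x)
  have hpK : p ∈ ⋂ i, K i := Set.mem_iInter.2 fun i =>
    (hcl i).mem_of_tendsto hp <| (eventually_ge_atTop i).mono fun j hij =>
      hK hij (proj_mem (hnei j) (hcl j) (hconv j) x)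
  have hpnormal : x - p ∈ normalCone (⋂ i, K i) p := fun z hz =>
    le_of_tendsto ((hp.const_sub x).inner (hp.const_sub z)) <| Eventually.of_forall fun i =>
      sub_proj_mem_normalCone (hnei i) (hcl i) (hconv i) x z (Set.mem_iInter.1 hz i)
  rwa [proj_eq_of_sub_mem_normalCone hpK hpnormal]

end NestedSets

section Blowdown

/-- The rescaled set `t⁻¹ (D - d)`; for `D` closed and convex and `d ∈ D` it decreases to the
recession cone of `D` as `t → ∞`. It is encoded as a preimage, so that `blowdown D d 0` is all of
`E` when `d ∈ D`. -/
def blowdown {E : Type*} [AddCommGroup E] [Module ℝ E] (D : Set E) (d : E) (t : ℝ) : Set E :=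
  {x | d + t • x ∈ D}

variable {E : Type*} [NormedAddCommGroup E]

lemma zero_mem_recCone (D : Set E) : (0 : E) ∈ recCone D := fun z hz => by rwa [zero_add]

lemma nsmul_add_mem_of_mem_recCone {D : Set E} {x d : E} (hx : x ∈ recCone D) (hd : d ∈ D)
    (k : ℕ) : k • x + d ∈ D := by
  induction k with
  | zero => rwa [zero_nsmul, zero_add]
  | succ k ih => simpa only [succ_nsmul', add_assoc] using hx _ ih

section NormedSpace

variable [NormedSpace ℝ E] {D : Set E} {d x : E} {s t : ℝ}

lemma isClosed_blowdown (hcl : IsClosed D) (d : E) (t : ℝ) : IsClosed (blowdown D d t) :=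
  hcl.preimage (by fun_prop : Continuous fun x : E => d + t • x)

lemma convex_blowdown (hconv : Convex ℝ D) (d : E) (t : ℝ) : Convex ℝ (blowdown D d t) :=
  (hconv.translate_preimage_right d).smul_preimage t

lemma blowdown_subset_blowdown (hconv : Convex ℝ D) (hd : d ∈ D) (hs : 0 ≤ s) (hst : s ≤ t) :
    blowdown D d t ⊆ blowdown D d s := by
  intro x hx
  have ht : 0 ≤ t := hs.trans hst
  have hmem : d + (s / t) • t • x ∈ D :=
    hconv.add_smul_mem hd hx ⟨div_nonneg hs ht, div_le_one_of_le₀ hst ht⟩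
  have hcancel : s / t * t = s := div_mul_cancel_of_imp fun h => by linarith
  rwa [smul_smul, hcancel] at hmem

lemma recCone_eq_asymptoticCone (hne : D.Nonempty) (hcl : IsClosed D) (hconv : Convex ℝ D) :
    recCone D = asymptoticCone ℝ D := by
  obtain ⟨d, hd⟩ := hne
  refine Set.Subset.antisymm (fun x hx => ?_) fun x hx z hz => ?_
  · have hray : Tendsto (fun k : ℕ => (k : ℝ) • x + d) atTop (AffineSpace.asymptoticNhds ℝ E x) :=
      Tendsto.asymptoticNhds_vadd_const d
        (tendsto_natCast_atTop_atTop.atTop_smul_const_tendsto_asymptoticNhds x)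
    refine mem_asymptoticCone_iff.2 (hray.frequently (Frequently.of_forall fun k => ?_))
    rw [Nat.cast_smul_eq_nsmul]
    exact nsmul_add_mem_of_mem_recCone hx hd k
  · simpa using hconv.smul_vadd_mem_of_isClosed_of_mem_asymptoticCone hcl zero_le_one hx hz

lemma iInter_blowdown (hcl : IsClosed D) (hconv : Convex ℝ D) (hd : d ∈ D) :
    ⋂ t : Set.Ioi (0 : ℝ), blowdown D d t = recCone D := by
  rw [recCone_eq_asymptoticCone ⟨d, hd⟩ hcl hconv]
  refine Set.Subset.antisymm (fun x hx => ?_) fun x hx => Set.mem_iInter.2 fun t => ?_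
  · have hray : Tendsto (fun t : ℝ => d + t • x) atTop (AffineSpace.asymptoticNhds ℝ E x) :=
      (tendsto_id.atTop_smul_const_tendsto_asymptoticNhds x).const_vadd_asymptoticNhds d
    refine mem_asymptoticCone_iff.2 (hray.frequently (Eventually.frequently ?_))
    filter_upwards [eventually_gt_atTop 0] with t ht using Set.mem_iInter.1 hx ⟨t, ht⟩
  · have hmem := hconv.smul_vadd_mem_of_isClosed_of_mem_asymptoticCone hcl t.2.le hx hd
    rwa [vadd_eq_add, add_comm] at hmem

end NormedSpace

variable [InnerProductSpace ℝ E] [CompleteSpace E] {D : Set E} {d : E}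

lemma proj_blowdown (hne : D.Nonempty) (hcl : IsClosed D) (hconv : Convex ℝ D) (d x : E) {t : ℝ}
    (ht : t ≠ 0) : proj (blowdown D d t) x = t⁻¹ • (proj D (d + t • x) - d) := by
  set p := proj D (d + t • x)
  have hmap : d + t • (t⁻¹ • (p - d)) = p := by rw [smul_inv_smul₀ ht, add_sub_cancel]
  refine proj_eq_of_sub_mem_normalCone ?_ fun z hz => ?_
  · change d + t • (t⁻¹ • (p - d)) ∈ D
    rw [hmap]
    exact proj_mem hne hcl hconv _
  · have hnormal : ⟪d + t • x - p, d + t • z - p⟫ ≤ 0 :=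
      sub_proj_mem_normalCone hne hcl hconv (d + t • x) _ hz
    have hscale (w : E) : d + t • w - p = t • (w - t⁻¹ • (p - d)) := by
      rw [smul_sub, smul_inv_smul₀ ht]
      abel
    rw [hscale, hscale, real_inner_smul_left, real_inner_smul_right, ← mul_assoc] at hnormal
    exact nonpos_of_mul_nonpos_right hnormal (mul_self_pos.2 ht)

lemma tendsto_inv_smul_proj_add_smul_sub (hcl : IsClosed D) (hconv : Convex ℝ D) (hd : d ∈ D)
    (x : E) :
    Tendsto (fun t : ℝ => t⁻¹ • (proj D (d + t • x) - d)) atTop (𝓝 (proj (recCone D) x)) := by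
  have hinter := iInter_blowdown hcl hconv hd
  have hanti : Antitone fun t : Set.Ioi (0 : ℝ) => blowdown D d t := fun s _ hst =>
    blowdown_subset_blowdown hconv hd s.2.le hst
  have hlim := tendsto_proj_iInter_of_antitone hanti (fun t => isClosed_blowdown hcl d t)
    (fun t => convex_blowdown hconv d t) (hinter ▸ ⟨0, zero_mem_recCone D⟩) x
  rw [hinter] at hlim
  exact tendsto_comp_val_Ioi_atTop.1 (hlim.congr fun t =>
    proj_blowdown ⟨d, hd⟩ hcl hconv d x t.2.ne')

end Blowdown

theorem stmt9_general {E : Type*} [NormedAddCommGroup E] [InnerProductSpace ℝ E] [CompleteSpace E]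
    {ι : Type*} {l : Filter ι} {D : Set E} (hne : D.Nonempty) (hcl : IsClosed D)
    (hconv : Convex ℝ D) {t : ι → ℝ} {y : ι → E} {x : E} (ht : Tendsto t l atTop)
    (hy : Tendsto (fun i => (t i)⁻¹ • y i) l (𝓝 x)) :
    Tendsto (fun i => (t i)⁻¹ • proj D (y i)) l (𝓝 (proj (recCone D) x)) := by
  obtain ⟨d, hd⟩ := hne
  have hinv : Tendsto (fun i => (t i)⁻¹ • d) l (𝓝 0) := by
    simpa using (tendsto_inv_atTop_zero.comp ht).smul_const d
  have hray : Tendsto (fun i => (t i)⁻¹ • proj D (d + t i • x)) l (𝓝 (proj (recCone D) x)) := by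
    simpa [smul_sub] using
      ((tendsto_inv_smul_proj_add_smul_sub hcl hconv hd x).comp ht).add hinv
  have herror : Tendsto (fun i => ‖(t i)⁻¹ • (d + t i • x - y i)‖) l (𝓝 0) := by
    have hsub : Tendsto (fun i => (t i)⁻¹ • d + x - (t i)⁻¹ • y i) l (𝓝 0) := by
      simpa using (hinv.add_const x).sub hy
    refine (norm_zero (E := E) ▸ hsub.norm).congr' ?_
    filter_upwards [ht.eventually_ne_atTop 0] with i hi
    rw [smul_sub, smul_add, inv_smul_smul₀ hi]
  refine hray.congr_dist (squeeze_zero (fun _ => dist_nonneg) (fun i => ?_) herror)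
  rw [dist_eq_norm, ← smul_sub, norm_smul, norm_smul]
  gcongr
  exact norm_proj_sub_proj_le ⟨d, hd⟩ hcl hconv _ _

/-- if `y^j / j → ȳ`, then `π_D[y^j]/j → π_{rec D}[ȳ]`. -/
theorem stmt9 {n : ℕ} (D : Set (EuclideanSpace ℝ (Fin n)))
    (hDne : D.Nonempty) (hDcl : IsClosed D) (hDconv : Convex ℝ D)
    (y : ℕ → EuclideanSpace ℝ (Fin n)) (ybar : EuclideanSpace ℝ (Fin n))
    (hy : Tendsto (fun j : ℕ => (j : ℝ)⁻¹ • y j) atTop (𝓝 ybar)) :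
    Tendsto (fun j : ℕ => (j : ℝ)⁻¹ • proj D (y j)) atTop
      (𝓝 (proj (recCone D) ybar)) :=
  stmt9_general hDne hDcl hDconv tendsto_natCast_atTop_atTop hy
end
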